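/- Suppose (𝕏,d,ν) satisfies Assumption (A). Let Λ ⊆ 𝕏 be bounded and measurable, R ≥ 0, ε ∈ (0,1], and let λ ∈ ℂ with |λ| ≤ (1−ε)/(e·B_R). Let φ be a symmetric repulsive potential with range at most R, y ∈ 𝕏, and let f be a measurable function on ⋃_{k≥1} 𝕏^k with values in ℂ such that |f(x)| ≤ B_R^{−k} for ν^k-almost all x ∈ Λ^k, for every k ≥ 1. Then | λ · exp( − Σ_{k≥1} (1/k!) ∫_{Λ^k} (1 − e^{−φ(y,x)}) · e^{−H(x | y_{≺x})} · f(x) dν^k(x) ) | ≤ (1−ε)/B_R. -/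

import Mathlib

/-!
Since `|λ| ≤ (1-ε)/(e B)` with `B = B_R`, it suffices that the series in the exponent has norm at
most `1`. Let `K` be the closed ball of radius `R` around `y` and let `g(a) = e^{-φ(y,a)}`. Put
`p = B⁻¹ ∫_{Λ ∩ K} (1 - g)` and `q = B⁻¹ ∫_{Λ ∩ K} g`, so that `p + q = ν(Λ ∩ K)/B ≤ 1`.

* By the finite range, `1 - e^{-φ(y,x)}` vanishes unless all points of `x` lie in `K`
  (`one_sub_expNeg_le`). Hence the `k = 1` term has norm at most `p`.
* For `k ≥ 2`, Assumption (A) gives `x_i ≠ z₀` almost surely, so every single point strictly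
  precedes `x`, and by repulsion `e^{-H(x | y_{≺x})} ≤ ∏ g(x_i)` (`expNeg_hamiltonian_le`). Hence
  the `k`-th term has norm at most `q^k / k! ≤ q / 2^{k-1}`.

Summing, the series has norm at most `p + q ≤ 1` (`norm_tsum_le_one`).
-/


open MeasureTheory
open scoped ENNReal NNReal BigOperators Classical

noncomputable section

namespace GibbsPP

variable {𝕏 : Type*}

/-- A potential: for each arity `k`, a symmetric function on `k`-tuples with values in
`ℝ ∪ {∞} ⊆ EReal` (the value `⊥ = -∞` is excluded by `IsPotential`). -/
abbrev Potential (𝕏 : Type*) : Type _ := ∀ k : ℕ, (Fin k → 𝕏) → EReal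

/-- The subtuple `x_S` of a tuple `x` indexed by the finite set `S`. -/
def subtuple {k : ℕ} (x : Fin k → 𝕏) (S : Finset (Fin k)) : Fin S.card → 𝕏 :=
  fun i => x (S.orderIsoOfFin rfl i).1

/-- `φ` is an honest potential: it never takes the value `-∞` (so its values lie in
`ℝ ∪ {∞}`) and each `φ_k` is measurable. -/
def IsPotential [MeasurableSpace 𝕏] (φ : Potential 𝕏) : Prop :=
  (∀ (k : ℕ) (x : Fin k → 𝕏), φ k x ≠ ⊥) ∧ ∀ k : ℕ, Measurable (φ k)

/-- Symmetry of a potential under permutations of the coordinates. -/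
def IsSymmetric (φ : Potential 𝕏) : Prop :=
  ∀ (k : ℕ) (π : Equiv.Perm (Fin k)) (x : Fin k → 𝕏), φ k (x ∘ π) = φ k x

/-- A potential is repulsive if all its values are nonnegative. -/
def Repulsive (φ : Potential 𝕏) : Prop := ∀ (k : ℕ) (x : Fin k → 𝕏), 0 ≤ φ k x

/-- `φ` has range at most `R`: `φ_k` vanishes on tuples of diameter greater than `R`. -/
def HasRange [PseudoMetricSpace 𝕏] (φ : Potential 𝕏) (R : ℝ) : Prop :=
  ∀ (k : ℕ) (x : Fin k → 𝕏), (∃ i j, R < dist (x i) (x j)) → φ k x = 0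

/-- The Hamiltonian `H(x) = ∑_{∅ ≠ S ⊆ [k]} φ(x_S)`. -/
def hamiltonian (φ : Potential 𝕏) {k : ℕ} (x : Fin k → 𝕏) : EReal :=
  ∑ S ∈ Finset.univ.powerset.erase (∅ : Finset (Fin k)), φ S.card (subtuple x S)

/-- `expNeg H = e^{-H}`, with `e^{-∞} = 0`. -/
def expNeg (H : EReal) : ℝ := if H = ⊤ then 0 else Real.exp (-H.toReal)

/-- The pinned potential `φ(· | x)`, given by `φ(y | x) = ∑_{S ⊆ [k]} φ(y, x_S)`. -/
def pin (φ : Potential 𝕏) {k : ℕ} (x : Fin k → 𝕏) : Potential 𝕏 :=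
  fun m y => ∑ S ∈ (Finset.univ : Finset (Fin k)).powerset,
    φ (m + S.card) (Fin.append y (subtuple x S))

/-- The ordering function `D(x₁, …, x_k) = ∑_j d(z, x_j)` (for a fixed base point `z`). -/
def D [PseudoMetricSpace 𝕏] (z : 𝕏) {k : ℕ} (x : Fin k → 𝕏) : ℝ := ∑ j, dist z (x j)

/-- The partially pinned potential `φ(· | y_{≺ t})`: the pinning at `y` is imposed exactly on
tuples `w` with `D(w) < t`, where `t ∈ [0, ∞]`. -/
def partialPin [PseudoMetricSpace 𝕏] (z : 𝕏) (φ : Potential 𝕏) (y : 𝕏) (t : ℝ≥0∞) :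
    Potential 𝕏 :=
  fun m w =>
    if ENNReal.ofReal (D z w) < t then pin φ (fun _ : Fin 1 => y) m w else φ m w

/-- The potential obtained from `φ` by replacing the one-body term by `∞` on `Δ`. -/
def restrictOne (φ : Potential 𝕏) (Δ : Set 𝕏) : Potential 𝕏 :=
  fun m x => if m = 1 ∧ ∀ i, x i ∈ Δ then ⊤ else φ m x

/-- The first `j` entries of a `k`-tuple (`j ≤ k`). -/
def firstN {k : ℕ} (x : Fin k → 𝕏) {j : ℕ} (h : j ≤ k) : Fin j → 𝕏 :=
  fun i => x (Fin.castLE h i)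

section Meas
variable [MeasurableSpace 𝕏]

/-- Assumption (A): for every `x`, the pushforward of `ν` under `y ↦ d(x,y)` is absolutely
continuous with respect to Lebesgue measure on `ℝ`. -/
def AssumptionA [PseudoMetricSpace 𝕏] (ν : Measure 𝕏) : Prop :=
  ∀ x : 𝕏, ν.map (fun y => dist x y) ≪ (volume : Measure ℝ)

/-- `B_R = sup_x ν(closedBall x R)`. -/
def ballVolSup [PseudoMetricSpace 𝕏] (ν : Measure 𝕏) (R : ℝ) : ℝ≥0∞ :=
  ⨆ x : 𝕏, ν (Metric.closedBall x R)

/-- The `k`-fold product measure `ν^k` on `𝕏^k`. -/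
def piMeasure (ν : Measure 𝕏) [SigmaFinite ν] (k : ℕ) : Measure (Fin k → 𝕏) :=
  Measure.pi fun _ => ν

/-- `Λ^k ⊆ 𝕏^k`. -/
def tupleSet (Λ : Set 𝕏) (k : ℕ) : Set (Fin k → 𝕏) := Set.univ.pi fun _ => Λ

/-- The grand-canonical partition function
`Z_{Λ,φ}(λ) = ∑_{k ≥ 0} (λ^k / k!) ∫_{Λ^k} e^{-H(x)} dν^k(x)`. -/
def partitionFunction (ν : Measure 𝕏) [SigmaFinite ν] (Λ : Set 𝕏) (φ : Potential 𝕏)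
    (lam : ℂ) : ℂ :=
  ∑' k : ℕ, (lam ^ k / (Nat.factorial k : ℂ)) *
    ∫ x in tupleSet Λ k, (expNeg (hamiltonian φ x) : ℂ) ∂(piMeasure ν k)

/-- The modified `k`-point density `κ(x) = λ^k Z_{Λ,φ}(λ | x) / Z_{Λ,φ}(λ)`. -/
def density (ν : Measure 𝕏) [SigmaFinite ν] (Λ : Set 𝕏) (φ : Potential 𝕏) (lam : ℂ)
    {k : ℕ} (x : Fin k → 𝕏) : ℂ :=
  lam ^ k * partitionFunction ν Λ (pin φ x) lam / partitionFunction ν Λ φ lam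

/-- `Φ` is `δ`-zero-free on `Λ` at activity `lam`. -/
def ZeroFree (ν : Measure 𝕏) [SigmaFinite ν] (Λ : Set 𝕏) (lam : ℂ) (δ : ℝ)
    (Φ : Set (Potential 𝕏)) : Prop :=
  ∀ φ ∈ Φ, δ ≤ ‖partitionFunction ν Λ φ lam‖

/-- `Φ` is closed under modification (with respect to the ordering based at `z`). -/
def ClosedUnderModification [PseudoMetricSpace 𝕏] (z : 𝕏) (Φ : Set (Potential 𝕏)) : Prop :=
  (∀ φ ∈ Φ, ∀ (y : 𝕏) (t : ℝ≥0∞), partialPin z φ y t ∈ Φ) ∧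
  (∀ φ ∈ Φ, ∀ Δ : Set 𝕏, MeasurableSet Δ → restrictOne φ Δ ∈ Φ)

end Meas
/-! ### Basic facts on `expNeg` -/

lemma expNeg_nonneg (a : EReal) : 0 ≤ expNeg a := by
  unfold expNeg; split_ifs <;> positivity

lemma expNeg_zero : expNeg 0 = 1 := by simp [expNeg]

lemma expNeg_anti {a b : EReal} (ha : 0 ≤ a) (hab : a ≤ b) : expNeg b ≤ expNeg a := by
  by_cases hb : b = ⊤
  · subst hb
    simpa [expNeg] using expNeg_nonneg a
  · have ha' : a ≠ ⊤ := fun h => hb (top_le_iff.1 (h ▸ hab))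
    have hab' : a.toReal ≤ b.toReal :=
      EReal.toReal_le_toReal hab (ne_of_gt (lt_of_lt_of_le EReal.bot_lt_zero ha)) hb
    simp only [expNeg, ha', hb, if_false]
    exact Real.exp_le_exp.2 (by linarith)

lemma expNeg_le_one {a : EReal} (ha : 0 ≤ a) : expNeg a ≤ 1 :=
  expNeg_zero ▸ expNeg_anti le_rfl ha

lemma expNeg_add {a b : EReal} (ha : 0 ≤ a) (hb : 0 ≤ b) :
    expNeg (a + b) = expNeg a * expNeg b := by
  have ha0 : a ≠ ⊥ := ne_of_gt (lt_of_lt_of_le EReal.bot_lt_zero ha)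
  have hb0 : b ≠ ⊥ := ne_of_gt (lt_of_lt_of_le EReal.bot_lt_zero hb)
  induction a with
  | bot => exact absurd rfl ha0
  | top => simp [expNeg, EReal.top_add_of_ne_bot hb0]
  | coe r =>
    induction b with
    | bot => exact absurd rfl hb0
    | top => simp [expNeg]
    | coe s =>
      rw [← EReal.coe_add]
      simp only [expNeg, EReal.coe_ne_top, if_false, EReal.toReal_coe]
      rw [← Real.exp_add]
      congr 1
      ring

lemma expNeg_sum {ι : Type*} (s : Finset ι) (a : ι → EReal) (ha : ∀ i, 0 ≤ a i) :
    expNeg (∑ i ∈ s, a i) = ∏ i ∈ s, expNeg (a i) := by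
  induction s using Finset.induction_on with
  | empty => simp [expNeg_zero]
  | insert i s hi ih =>
    rw [Finset.sum_insert hi, Finset.prod_insert hi,
      expNeg_add (ha i) (Finset.sum_nonneg fun j _ => ha j), ih]

lemma measurable_expNeg : Measurable expNeg := by
  unfold expNeg
  refine Measurable.ite (measurableSet_singleton _) measurable_const ?_
  exact Real.measurable_exp.comp measurable_ereal_toReal.neg

/-! ### The pinned pair interaction inside the partially pinned Hamiltonian -/

lemma pin_one_nonneg {φ : Potential 𝕏} (hrep : Repulsive φ) (y : 𝕏) (m : ℕ)
    (w : Fin m → 𝕏) : 0 ≤ pin φ (fun _ : Fin 1 => y) m w :=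
  Finset.sum_nonneg fun _ _ => hrep _ _

lemma partialPin_nonneg [PseudoMetricSpace 𝕏] {φ : Potential 𝕏} (hrep : Repulsive φ)
    (z y : 𝕏) (t : ℝ≥0∞) (m : ℕ) (w : Fin m → 𝕏) : 0 ≤ partialPin z φ y t m w := by
  unfold partialPin
  split_ifs
  · exact pin_one_nonneg hrep _ _ _
  · exact hrep _ _

/-- Pinning at `y` adds the pair interaction with `y` to the one-body term. The arity is kept as a
variable because it occurs as the cardinality of a singleton. -/
lemma pair_le_partialPin [PseudoMetricSpace 𝕏] {φ : Potential 𝕏} (hsym : IsSymmetric φ)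
    (hrep : Repulsive φ) (z y a : 𝕏) (t : ℝ≥0∞) (m : ℕ) (hm : m = 1) (w : Fin m → 𝕏)
    (hw : ∀ i, w i = a) (ht : ENNReal.ofReal (dist z a) < t) :
    φ 2 ![y, a] ≤ partialPin z φ y t m w := by
  subst hm
  have hD : D z w = dist z a := by simp [D, hw]
  rw [partialPin, hD, if_pos ht]
  unfold pin
  refine le_trans (le_of_eq ?_)
    (Finset.single_le_sum (fun _ _ => hrep _ _)
      (Finset.mem_powerset_self (Finset.univ : Finset (Fin 1))))
  rw [← hsym 2 (Equiv.swap 0 1)]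
  change φ 2 _ = φ 2 _
  congr 1
  funext i
  fin_cases i
  · exact (hw 0).symm
  · rfl

/-- When at least two points are present and none of them is the base point, every one-point
subtuple strictly precedes `x`, so its pinned pair term appears in `H(x | y_{≺x})`. -/
lemma expNeg_hamiltonian_le [PseudoMetricSpace 𝕏] {φ : Potential 𝕏} (hsym : IsSymmetric φ)
    (hrep : Repulsive φ) (z y : 𝕏) (k : ℕ) (x : Fin (k + 2) → 𝕏)
    (hx : ∀ i, dist z (x i) ≠ 0) :
    expNeg (hamiltonian (partialPin z φ y (ENNReal.ofReal (D z x))) x)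
      ≤ ∏ i, expNeg (φ 2 ![y, x i]) := by
  rw [← expNeg_sum _ _ fun i => hrep _ _]
  refine expNeg_anti (Finset.sum_nonneg fun i _ => hrep _ _) ?_
  set ψ := partialPin z φ y (ENNReal.ofReal (D z x)) with hψ
  have hpos : ∀ i, 0 < dist z (x i) := fun i => lt_of_le_of_ne dist_nonneg (hx i).symm
  have hlt : ∀ i, dist z (x i) < D z x := by
    intro i
    obtain ⟨j, hj⟩ := exists_ne i
    have : dist z (x i) + dist z (x j) ≤ D z x := by
      unfold D
      rw [← Finset.sum_pair hj.symm (f := fun j => dist z (x j))]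
      exact Finset.sum_le_sum_of_subset_of_nonneg (Finset.subset_univ _)
        fun _ _ _ => dist_nonneg
    linarith [hpos j]
  calc ∑ i, φ 2 ![y, x i]
      ≤ ∑ i, ψ ({i} : Finset (Fin (k + 2))).card (subtuple x {i}) := by
        refine Finset.sum_le_sum fun i _ => ?_
        refine pair_le_partialPin hsym hrep z y (x i) _ _ (Finset.card_singleton i) _ ?_ ?_
        · intro j
          have := (({i} : Finset (Fin (k + 2))).orderIsoOfFin rfl j).2
          rw [Finset.mem_singleton] at this
          simp only [subtuple, this]
        · exact (ENNReal.ofReal_lt_ofReal_iff (lt_of_le_of_lt dist_nonneg (hlt i))).2 (hlt i)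
    _ = ∑ S ∈ Finset.univ.image (fun i : Fin (k + 2) => ({i} : Finset (Fin (k + 2)))),
          ψ S.card (subtuple x S) :=
        by rw [Finset.sum_image fun _ _ _ _ h => Finset.singleton_injective h]
    _ ≤ hamiltonian ψ x := by
        unfold hamiltonian
        refine Finset.sum_le_sum_of_subset_of_nonneg ?_
          fun _ _ _ => partialPin_nonneg hrep _ _ _ _ _
        intro S hS
        obtain ⟨i, -, rfl⟩ := Finset.mem_image.1 hS
        simp

/-- By the finite range, the factor `1 - e^{-φ(y,x)}` vanishes unless all points of `x` lie in the
ball of radius `R` around `y`. -/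
lemma one_sub_expNeg_le [PseudoMetricSpace 𝕏] {φ : Potential 𝕏} {R : ℝ}
    (hrange : HasRange φ R) (y : 𝕏) (k : ℕ) (x : Fin k → 𝕏) :
    1 - expNeg (φ (k + 1) (Fin.cons y x))
      ≤ ∏ i, (Metric.closedBall y R).indicator (fun _ => (1 : ℝ)) (x i) := by
  by_cases h : ∀ i, x i ∈ Metric.closedBall y R
  · simp only [Set.indicator_of_mem (h _), Finset.prod_const_one]
    linarith [expNeg_nonneg (φ (k + 1) (Fin.cons y x))]
  · push Not at h
    obtain ⟨i, hi⟩ := h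
    have h0 : φ (k + 1) (Fin.cons y x) = 0 := by
      refine hrange _ _ ⟨i.succ, 0, ?_⟩
      simpa using hi
    rw [h0, expNeg_zero, sub_self]
    exact Finset.prod_nonneg fun j _ => Set.indicator_nonneg (fun _ _ => zero_le_one) _

/-! ### Bounds on the individual terms and on the series -/

/-- An integral over `Λ^k` whose integrand is dominated by `c ∏ h(x_i)` is bounded by
`c (∫_Λ h)^k`. -/
lemma norm_setIntegral_tuple_le [MeasurableSpace 𝕏] (ν : Measure 𝕏) [SigmaFinite ν] (Λ : Set 𝕏)
    (hΛm : MeasurableSet Λ) (k : ℕ) (F : (Fin k → 𝕏) → ℂ) (h : 𝕏 → ℝ) (c : ℝ)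
    (hh : Integrable h (ν.restrict Λ))
    (hF : ∀ᵐ x ∂(piMeasure ν k), x ∈ tupleSet Λ k → ‖F x‖ ≤ c * ∏ i, h (x i)) :
    ‖∫ x in tupleSet Λ k, F x ∂(piMeasure ν k)‖ ≤ c * (∫ a in Λ, h a ∂ν) ^ k := by
  have hres : (piMeasure ν k).restrict (tupleSet Λ k)
      = Measure.pi fun _ : Fin k => ν.restrict Λ := by
    unfold piMeasure tupleSet
    exact Measure.restrict_pi_pi _ _
  have hset : MeasurableSet (tupleSet Λ k) := MeasurableSet.univ_pi fun _ => hΛm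
  rw [← ae_restrict_iff' hset, hres] at hF
  rw [hres]
  have hint : Integrable (fun x : Fin k → 𝕏 => ∏ i, h (x i))
      (Measure.pi fun _ : Fin k => ν.restrict Λ) :=
    Integrable.fintype_prod fun _ => hh
  refine (norm_integral_le_of_norm_le (hint.const_mul c) hF).trans (le_of_eq ?_)
  rw [integral_const_mul]
  congr 1
  rw [integral_fintype_prod_eq_prod (𝕜 := ℝ) (fun _ : Fin k => h)]
  simp

lemma two_pow_le_factorial_succ (n : ℕ) : 2 ^ n ≤ (n + 1).factorial := by
  induction n with
  | zero => simp
  | succ n ih =>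
    rw [pow_succ, Nat.factorial_succ, mul_comm]
    exact Nat.mul_le_mul (by omega) ih

/-- If `p + q ≤ 1`, a series with first term at most `p` and with `n`-th term at most
`q^{n+1}/(n+1)! ≤ q/2^n` afterwards has sum of norm at most `p + q ≤ 1`. -/
lemma norm_tsum_le_one (c : ℕ → ℂ) (p q : ℝ) (hp : 0 ≤ p) (hq : 0 ≤ q) (hpq : p + q ≤ 1)
    (h0 : ‖c 0‖ ≤ p)
    (h1 : ∀ n, ‖c (n + 1)‖ ≤ 1 / ((n + 2).factorial : ℝ) * q ^ (n + 2)) :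
    ‖∑' n, c n‖ ≤ 1 := by
  have hs : HasSum (fun n : ℕ => Nat.casesOn n p fun m => q / 2 / 2 ^ m) (p + q) :=
    (hasSum_geometric_two' q).zero_add
  refine (tsum_of_norm_bounded hs ?_).trans hpq
  rintro (_ | n)
  · exact h0
  · refine (h1 n).trans ?_
    have hfac : (2 : ℝ) ^ (n + 1) ≤ ((n + 2).factorial : ℝ) := by
      exact_mod_cast two_pow_le_factorial_succ (n + 1)
    have hqp : q ^ (n + 2) ≤ q := by
      simpa using pow_le_pow_of_le_one hq (by linarith) (show 1 ≤ n + 2 by omega)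
    calc 1 / ((n + 2).factorial : ℝ) * q ^ (n + 2)
        ≤ 1 / (2 : ℝ) ^ (n + 1) * q := by gcongr
      _ = q / 2 / 2 ^ n := by
        rw [pow_succ]; field_simp

/-- (Lemma `claim:boundedRange`.) Under Assumption (A), let
`|λ| ≤ (1-ε)/(e B_R)` with `ε ∈ (0,1]`, let `φ` be a symmetric repulsive potential of range
at most `R`, `y ∈ 𝕏`, and let `f` be measurable with `|f(x)| ≤ B_R^{-k}` for `ν^k`-a.e.
`x ∈ Λ^k`, for every `k ≥ 1`. Then
`|λ exp(-∑_{k≥1} (1/k!) ∫_{Λ^k} (1 - e^{-φ(y,x)}) e^{-H(x|y_{≺x})} f(x) dν^k(x))|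
  ≤ (1-ε)/B_R`. -/
theorem statement15 {𝕏 : Type*} [MetricSpace 𝕏] [CompleteSpace 𝕏]
    [TopologicalSpace.SeparableSpace 𝕏] [MeasurableSpace 𝕏] [BorelSpace 𝕏]
    (ν : Measure 𝕏) [IsLocallyFiniteMeasure ν] [SigmaFinite ν]
    (hA : AssumptionA ν) (z₀ : 𝕏)
    (Λ : Set 𝕏) (hΛb : Bornology.IsBounded Λ) (hΛm : MeasurableSet Λ)
    (R : ℝ) (hR : 0 ≤ R) (ε : ℝ) (hε : ε ∈ Set.Ioc (0 : ℝ) 1)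
    (lam : ℂ) (hlam : ‖lam‖ ≤ (1 - ε) / (Real.exp 1 * (ballVolSup ν R).toReal))
    (φ : Potential 𝕏) (hpot : IsPotential φ) (hsym : IsSymmetric φ) (hrep : Repulsive φ)
    (hrange : HasRange φ R) (y : 𝕏)
    (f : ∀ k : ℕ, (Fin k → 𝕏) → ℂ) (hfm : ∀ k, Measurable (f k))
    (hf : ∀ k : ℕ, ∀ᵐ x ∂(piMeasure ν (k + 1)), x ∈ tupleSet Λ (k + 1) →
      ‖f (k + 1) x‖ ≤ ((ballVolSup ν R).toReal ^ (k + 1))⁻¹) :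
    ‖lam * Complex.exp
        (- ∑' k : ℕ, (1 / (Nat.factorial (k + 1) : ℂ)) *
          ∫ x in tupleSet Λ (k + 1),
            (1 - (expNeg (φ (k + 2) (Fin.cons y x)) : ℂ)) *
              (expNeg (hamiltonian (partialPin z₀ φ y (ENNReal.ofReal (D z₀ x))) x) : ℂ) *
              f (k + 1) x
            ∂(piMeasure ν (k + 1)))‖ ≤ (1 - ε) / (ballVolSup ν R).toReal := by
  set B : ℝ := (ballVolSup ν R).toReal with hB
  have hB0 : 0 ≤ B := ENNReal.toReal_nonneg
  rcases hB0.eq_or_lt with hBz | hBpos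
  · -- `B_R ∈ {0, ∞}`: the convention `a / 0 = 0` forces `λ = 0`.
    rw [← hBz] at hlam ⊢
    have : lam = 0 := by simpa using hlam
    simp [this]
  have hBtop : ballVolSup ν R ≠ ⊤ := fun h => by simp [hB, h] at hBpos
  set K := Metric.closedBall y R with hK
  have hKle : ν K ≤ ballVolSup ν R := le_iSup (fun x => ν (Metric.closedBall x R)) y
  have hKm : MeasurableSet K := Metric.isClosed_closedBall.measurableSet
  have hKfin : ν.restrict Λ K < ⊤ :=
    (Measure.restrict_apply_le _ _).trans_lt (hKle.trans_lt hBtop.lt_top)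
  set g : 𝕏 → ℝ := fun a => expNeg (φ 2 ![y, a]) with hg
  have hgm : Measurable g := by
    refine measurable_expNeg.comp ((hpot.2 2).comp ?_)
    refine measurable_pi_lambda _ fun i => ?_
    fin_cases i
    · exact measurable_const
    · exact measurable_id
  have hg0 : ∀ a, 0 ≤ g a := fun a => expNeg_nonneg _
  have hg1 : ∀ a, g a ≤ 1 := fun a => expNeg_le_one (hrep _ _)
  set u : 𝕏 → ℝ := K.indicator fun a => 1 - g a with hu
  set v : 𝕏 → ℝ := K.indicator g with hv
  have hbdd : ∀ h : 𝕏 → ℝ, Measurable h → (∀ a, ‖h a‖ ≤ 1) →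
      Integrable (K.indicator h) (ν.restrict Λ) := by
    intro h hm hb
    rw [integrable_indicator_iff hKm]
    exact Measure.integrableOn_of_bounded hKfin.ne hm.aestronglyMeasurable
      (Filter.Eventually.of_forall hb)
  have hui : Integrable u (ν.restrict Λ) := hbdd _ (measurable_const.sub hgm) fun a => by
    rw [Real.norm_eq_abs, abs_le]; constructor <;> linarith [hg0 a, hg1 a]
  have hvi : Integrable v (ν.restrict Λ) := hbdd _ hgm fun a => by
    rw [Real.norm_eq_abs, abs_le]; constructor <;> linarith [hg0 a, hg1 a]
  have hu0 : ∀ a, 0 ≤ u a := Set.indicator_nonneg fun a _ => by linarith [hg1 a]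
  have hv0 : ∀ a, 0 ≤ v a := Set.indicator_nonneg fun a _ => hg0 a
  set P := ∫ a in Λ, u a ∂ν with hP
  set Q := ∫ a in Λ, v a ∂ν with hQ
  have hP0 : 0 ≤ P := integral_nonneg hu0
  have hQ0 : 0 ≤ Q := integral_nonneg hv0
  have hPQ : P + Q ≤ B := by
    rw [hP, hQ, ← integral_add hui hvi]
    have huv : (fun a => u a + v a) = K.indicator fun _ => (1 : ℝ) := by
      funext a
      by_cases ha : a ∈ K <;> simp [hu, hv, ha]
    rw [huv, integral_indicator hKm]
    simp only [integral_const, smul_eq_mul, mul_one, measureReal_restrict_apply_univ]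
    exact ENNReal.toReal_mono hBtop ((Measure.restrict_apply_le _ _).trans hKle)
  -- Assumption (A) excludes an atom at the base point.
  have hz : ∀ᵐ a ∂ν, dist z₀ a ≠ 0 := by
    have hmap : ∀ᵐ r ∂(ν.map fun a => dist z₀ a), r ≠ 0 := by
      refine (hA z₀).ae_le ?_
      exact Measure.ae_ne volume 0
    exact ae_of_ae_map (f := fun a => dist z₀ a) (by fun_prop) hmap
  have hzk : ∀ k, ∀ᵐ x ∂(piMeasure ν k), ∀ i, dist z₀ (x i) ≠ 0 := by
    intro k
    rw [ae_all_iff]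
    intro i
    exact (Measure.quasiMeasurePreserving_eval (fun _ : Fin k => ν) i).ae hz
  have hsum : ‖∑' k : ℕ, (1 / (Nat.factorial (k + 1) : ℂ)) *
          ∫ x in tupleSet Λ (k + 1),
            (1 - (expNeg (φ (k + 2) (Fin.cons y x)) : ℂ)) *
              (expNeg (hamiltonian (partialPin z₀ φ y (ENNReal.ofReal (D z₀ x))) x) : ℂ) *
              f (k + 1) x
            ∂(piMeasure ν (k + 1))‖ ≤ 1 := by
    have hnorm : ∀ k (x : Fin (k + 1) → 𝕏),
        ‖(1 - (expNeg (φ (k + 2) (Fin.cons y x)) : ℂ)) *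
          (expNeg (hamiltonian (partialPin z₀ φ y (ENNReal.ofReal (D z₀ x))) x) : ℂ) *
            f (k + 1) x‖ = (1 - expNeg (φ (k + 2) (Fin.cons y x))) *
          expNeg (hamiltonian (partialPin z₀ φ y (ENNReal.ofReal (D z₀ x))) x) *
            ‖f (k + 1) x‖ := by
      intro k x
      have h1 : 0 ≤ 1 - expNeg (φ (k + 2) (Fin.cons y x)) :=
        sub_nonneg.2 (expNeg_le_one (hrep _ _))
      rw [norm_mul, norm_mul, ← Complex.ofReal_one, ← Complex.ofReal_sub,
        Complex.norm_of_nonneg h1, Complex.norm_of_nonneg (expNeg_nonneg _)]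
    refine norm_tsum_le_one _ (P / B) (Q / B) (by positivity) (by positivity) ?_ ?_ ?_
    · rw [← add_div]
      exact (div_le_one hBpos).2 hPQ
    · have key := norm_setIntegral_tuple_le ν Λ hΛm 1 (fun x =>
        (1 - (expNeg (φ 2 (Fin.cons y x)) : ℂ)) *
          (expNeg (hamiltonian (partialPin z₀ φ y (ENNReal.ofReal (D z₀ x))) x) : ℂ) *
            f 1 x) u B⁻¹ hui ?_
      · rw [norm_mul]
        refine (mul_le_mul_of_nonneg_left key (norm_nonneg _)).trans (le_of_eq ?_)
        simp only [zero_add, Nat.factorial_one, Nat.cast_one, div_one, norm_one, pow_one, ← hP]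
        field_simp
      · filter_upwards [hf 0] with x hfx hx
        rw [hnorm 0 x]
        have hfx' : ‖f 1 x‖ ≤ B⁻¹ := by simpa using hfx hx
        have hcons : (Fin.cons y x : Fin 2 → 𝕏) = ![y, x 0] := by
          funext i
          fin_cases i <;> rfl
        have hux : 1 - expNeg (φ 2 (Fin.cons y x)) ≤ u (x 0) := by
          by_cases hxK : x 0 ∈ K
          · simp [hu, hxK, hg, hcons]
          · have := one_sub_expNeg_le hrange y 1 x
            simpa [hu, ← hK, hxK] using this
        have hH := expNeg_le_one (a := hamiltonian
          (partialPin z₀ φ y (ENNReal.ofReal (D z₀ x))) x)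
          (Finset.sum_nonneg fun _ _ => partialPin_nonneg hrep _ _ _ _ _)
        calc _ ≤ u (x 0) * 1 * B⁻¹ := by
              have := hu0 (x 0)
              have := expNeg_nonneg (hamiltonian
                (partialPin z₀ φ y (ENNReal.ofReal (D z₀ x))) x)
              gcongr
          _ = B⁻¹ * ∏ i, u (x i) := by simp [mul_comm]
    · intro n
      have key := norm_setIntegral_tuple_le ν Λ hΛm (n + 2) (fun x =>
        (1 - (expNeg (φ (n + 3) (Fin.cons y x)) : ℂ)) *
          (expNeg (hamiltonian (partialPin z₀ φ y (ENNReal.ofReal (D z₀ x))) x) : ℂ) *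
            f (n + 2) x) v (B ^ (n + 2))⁻¹ hvi ?_
      · rw [norm_mul]
        refine (mul_le_mul_of_nonneg_left key (norm_nonneg _)).trans (le_of_eq ?_)
        rw [← hQ, div_pow, norm_div, norm_one, Complex.norm_natCast]
        ring
      · filter_upwards [hf (n + 1), hzk (n + 2)] with x hfx hzx hx
        rw [hnorm (n + 1) x]
        have h1 := one_sub_expNeg_le hrange y (n + 2) x
        have h2 := expNeg_hamiltonian_le hsym hrep z₀ y n x hzx
        have hI0 : 0 ≤ ∏ i, K.indicator (fun _ => (1 : ℝ)) (x i) :=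
          Finset.prod_nonneg fun j _ => Set.indicator_nonneg (fun _ _ => zero_le_one) _
        have hg0' : 0 ≤ ∏ i, expNeg (φ 2 ![y, x i]) :=
          Finset.prod_nonneg fun j _ => expNeg_nonneg _
        calc _ ≤ (∏ i, K.indicator (fun _ => (1 : ℝ)) (x i)) *
                (∏ i, expNeg (φ 2 ![y, x i])) * (B ^ (n + 2))⁻¹ := by
              refine mul_le_mul (mul_le_mul h1 h2 (expNeg_nonneg _) hI0) (hfx hx)
                (norm_nonneg _) (mul_nonneg hI0 hg0')
          _ = (B ^ (n + 2))⁻¹ * ∏ i, v (x i) := by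
              rw [← Finset.prod_mul_distrib, mul_comm]
              congr 1
              refine Finset.prod_congr rfl fun i _ => ?_
              by_cases hi : x i ∈ K <;> simp [hv, hg, hi]
  rw [norm_mul, Complex.norm_exp]
  have hexp : ∀ s : ℂ, ‖s‖ ≤ 1 → Real.exp (-s).re ≤ Real.exp 1 := fun s hs =>
    Real.exp_le_exp.2 (((Complex.re_le_norm _).trans (norm_neg s).le).trans hs)
  have he : 0 ≤ (1 - ε) / (Real.exp 1 * B) :=
    div_nonneg (by linarith [hε.2]) (by positivity)
  refine (mul_le_mul hlam (hexp _ hsum) (Real.exp_pos _).le he).trans (le_of_eq ?_)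
  have := Real.exp_pos 1
  field_simp

end GibbsPP
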